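/- Let Γ be a Shilla distance-regular graph with b = b(Γ). Then -b² < θ₃ < -b, where θ₃ is the smallest eigenvalue of Γ. -/

import Mathlib

open Finset SimpleGraph

/-- `G` is a distance-regular graph with diameter `D` and intersection numbers
`b i`, `c i`, `a i` (so valency `k = b 0` and `a i = k - b i - c i`). -/
structure IsDRG {V : Type*} [Fintype V] (G : SimpleGraph V) (D : ℕ)
    (b c a : ℕ → ℕ) : Prop where
  connected : G.Connected
  le_diam : ∀ x y : V, G.dist x y ≤ D
  exists_diam : ∃ x y : V, G.dist x y = D
  card_b : ∀ i, i ≤ D → ∀ x y : V, G.dist x y = i →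
      Nat.card {z : V | G.Adj y z ∧ G.dist x z = i + 1} = b i
  card_c : ∀ i, i ≤ D → ∀ x y : V, G.dist x y = i →
      Nat.card {z : V | G.Adj y z ∧ G.dist x z = i - 1} = c i
  card_a : ∀ i, i ≤ D → ∀ x y : V, G.dist x y = i →
      Nat.card {z : V | G.Adj y z ∧ G.dist x z = i} = a i

/-- `θ` is an eigenvalue of the adjacency matrix of `G`. -/
def IsEig {V : Type*} [Fintype V] [DecidableEq V] (G : SimpleGraph V)
    [DecidableRel G.Adj] (θ : ℝ) : Prop :=
  ∃ v : V → ℝ, v ≠ 0 ∧ (G.adjMatrix ℝ).mulVec v = θ • v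

/-- `θ` is the second largest eigenvalue of `G` (`k` being the largest). -/
def IsSecondLargestEig {V : Type*} [Fintype V] [DecidableEq V] (G : SimpleGraph V)
    [DecidableRel G.Adj] (k θ : ℝ) : Prop :=
  IsEig G θ ∧ θ < k ∧ ∀ η : ℝ, IsEig G η → η ≠ k → η ≤ θ

/-- `θ` is the smallest eigenvalue of `G`. -/
def IsSmallestEig {V : Type*} [Fintype V] [DecidableEq V] (G : SimpleGraph V)
    [DecidableRel G.Adj] (θ : ℝ) : Prop :=
  IsEig G θ ∧ ∀ η : ℝ, IsEig G η → θ ≤ η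

/-- The multiplicity of `θ` as an eigenvalue of the adjacency matrix of `G`. -/
noncomputable def eigMult {V : Type*} [Fintype V] [DecidableEq V] (G : SimpleGraph V)
    [DecidableRel G.Adj] (θ : ℝ) : ℕ :=
  Module.finrank ℝ ↥(Module.End.eigenspace (Matrix.toLin' (G.adjMatrix ℝ)) θ)

/-- A Shilla distance-regular graph: diameter `3` and second largest eigenvalue `a 3`. -/
structure IsShilla {V : Type*} [Fintype V] [DecidableEq V] (G : SimpleGraph V)
    [DecidableRel G.Adj] (b c a : ℕ → ℕ) : Prop where
  drg : IsDRG G 3 b c a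
  second : IsSecondLargestEig G (b 0) ((a 3 : ℝ))

/-- The distance matrix of `G` with parameter `i`, marking the pairs of vertices at distance `i`. -/
noncomputable def distMatrix {V : Type*} (G : SimpleGraph V) (i : ℕ) : Matrix V V ℝ :=
  Matrix.of fun x y => if G.dist x y = i then 1 else 0

/-- The recurrences `A Aᵢ = bᵢ₋₁ Aᵢ₋₁ + aᵢ Aᵢ + cᵢ₊₁ Aᵢ₊₁` in diameter three. -/
structure DistanceRecurrence {V : Type*} [Fintype V] [DecidableEq V] (A A₂ A₃ : Matrix V V ℝ)
    (k a₁ a₂ a₃ b₁ b₂ c₂ c₃ : ℝ) : Prop where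
  mul_one : A * A = k • 1 + a₁ • A + c₂ • A₂
  mul_two : A * A₂ = b₁ • A + a₂ • A₂ + c₃ • A₃
  mul_three : A * A₃ = b₂ • A₂ + a₃ • A₃

namespace DistanceRecurrence

variable {V W : Type*} [Fintype V] [DecidableEq V] {A A₂ A₃ : Matrix V V ℝ}
  {k a₁ a₂ a₃ b₁ b₂ c₂ c₃ : ℝ}

theorem mul_eq_smul (h : DistanceRecurrence A A₂ A₃ k a₁ a₂ a₃ b₁ b₂ c₂ c₃)
    (hc₂ : c₂ ≠ 0) (hc₃ : c₃ ≠ 0) {θ p₂ p₃ : ℝ} {M : Matrix V W ℝ} (hM : A * M = θ • M)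
    (hp₂ : c₂ * p₂ = θ ^ 2 - a₁ * θ - k) (hp₃ : c₃ * p₃ = (θ - a₂) * p₂ - b₁ * θ) :
    A₂ * M = p₂ • M ∧ A₃ * M = p₃ • M ∧ ((θ - a₃) * p₃ - b₂ * p₂) • M = 0 := by
  have h₂ : A₂ * M = p₂ • M := by
    have e : (A * A) * M = θ • θ • M := by
      rw [Matrix.mul_assoc, hM, Matrix.mul_smul, hM]
    rw [h.mul_one] at e
    simp only [Matrix.add_mul, Matrix.smul_mul, Matrix.one_mul, hM] at e
    ext i j
    have e' := congr_fun₂ e i j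
    simp only [Matrix.add_apply, Matrix.smul_apply, smul_eq_mul] at e' ⊢
    apply mul_left_cancel₀ hc₂
    linear_combination e' - M i j * hp₂
  have h₃ : A₃ * M = p₃ • M := by
    have e : (A * A₂) * M = p₂ • θ • M := by
      rw [Matrix.mul_assoc, h₂, Matrix.mul_smul, hM]
    rw [h.mul_two] at e
    simp only [Matrix.add_mul, Matrix.smul_mul, h₂, hM] at e
    ext i j
    have e' := congr_fun₂ e i j
    simp only [Matrix.add_apply, Matrix.smul_apply, smul_eq_mul] at e' ⊢
    apply mul_left_cancel₀ hc₃
    linear_combination e' - M i j * hp₃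
  refine ⟨h₂, h₃, ?_⟩
  have e : (A * A₃) * M = p₃ • θ • M := by
    rw [Matrix.mul_assoc, h₃, Matrix.mul_smul, hM]
  rw [h.mul_three] at e
  simp only [Matrix.add_mul, Matrix.smul_mul, h₂, h₃] at e
  ext i j
  have e' := congr_fun₂ e i j
  simp only [Matrix.add_apply, Matrix.smul_apply, smul_eq_mul, Matrix.zero_apply] at e' ⊢
  linear_combination -e'

/-- The cosine sequence of `θ` yields a matrix all of whose columns are `θ`-eigenvectors. -/
theorem mul_cosineMatrix (h : DistanceRecurrence A A₂ A₃ k a₁ a₂ a₃ b₁ b₂ c₂ c₃)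
    {θ u₁ u₂ u₃ : ℝ} (h₀ : k * u₁ = θ) (h₁ : 1 + a₁ * u₁ + b₁ * u₂ = θ * u₁)
    (h₂ : c₂ * u₁ + a₂ * u₂ + b₂ * u₃ = θ * u₂) (h₃ : c₃ * u₂ + a₃ * u₃ = θ * u₃) :
    A * (1 + u₁ • A + u₂ • A₂ + u₃ • A₃) = θ • (1 + u₁ • A + u₂ • A₂ + u₃ • A₃) := by
  simp only [Matrix.mul_add, Matrix.mul_smul, h.mul_one, h.mul_two, h.mul_three, Matrix.mul_one]
  match_scalars
  · linear_combination h₁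
  · linear_combination h₀
  · linear_combination h₂
  · linear_combination h₃

end DistanceRecurrence

/-- A real symmetric matrix with unit diagonal whose square is a multiple of it is positive
semidefinite. -/
theorem Matrix.IsSymm.posSemidef_of_mul_self_eq_smul {V : Type*} [Fintype V] [DecidableEq V]
    {N : Matrix V V ℝ} (hN : N.IsSymm) (hd : ∀ x, N x x = 1) {γ : ℝ} (hγ : N * N = γ • N) :
    N.PosSemidef := by
  have hP : (N * N).PosSemidef := by
    simpa [Matrix.conjTranspose_eq_transpose_of_trivial, hN.eq] using
      Matrix.posSemidef_conjTranspose_mul_self N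
  rcases isEmpty_or_nonempty V with hV | ⟨⟨x⟩⟩
  · rw [Subsingleton.elim N 0]
    exact Matrix.PosSemidef.zero
  have hpos : 0 < γ := by
    have e := congr_fun₂ hγ x x
    rw [Matrix.mul_apply, Matrix.smul_apply, hd, smul_eq_mul, _root_.mul_one] at e
    rw [← e]
    have hx : N x x * N x x ≤ ∑ y, N x y * N y x :=
      Finset.single_le_sum (f := fun y => N x y * N y x)
        (fun y _ => by rw [hN.apply]; exact mul_self_nonneg _) (Finset.mem_univ x)
    rw [hd] at hx
    linarith
  have : N = γ⁻¹ • (N * N) := by rw [hγ, smul_smul, inv_mul_cancel₀ hpos.ne', one_smul]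
  rw [this]
  exact hP.smul (inv_nonneg.mpr hpos.le)

theorem distMatrix_isSymm {V : Type*} (G : SimpleGraph V) (i : ℕ) : (distMatrix G i).IsSymm := by
  ext x y
  simp [distMatrix, SimpleGraph.dist_comm]

theorem SimpleGraph.adjMatrix_mul_distMatrix_apply {V : Type*} [Fintype V]
    (G : SimpleGraph V) [DecidableRel G.Adj] (i : ℕ) (x y : V) :
    (G.adjMatrix ℝ * distMatrix G i) x y =
      (Nat.card {z : V | G.Adj x z ∧ G.dist y z = i} : ℝ) := by
  classical
  rw [SimpleGraph.adjMatrix_mul_apply, Nat.card_eq_fintype_card, Fintype.card_subtype]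
  simp only [distMatrix, Matrix.of_apply, Finset.sum_boole, Set.mem_ofPred_eq]
  congr 2
  ext z
  simp [SimpleGraph.dist_comm]

theorem SimpleGraph.card_adj_and_dist_eq_zero {V : Type*} {G : SimpleGraph V} {i : ℕ}
    {x y : V} (h : i + 1 < G.dist y x ∨ G.dist y x + 1 < i) :
    Nat.card {z : V | G.Adj x z ∧ G.dist y z = i} = 0 := by
  have : {z : V | G.Adj x z ∧ G.dist y z = i} = ∅ := by
    ext z
    simp only [Set.mem_ofPred_eq, Set.mem_empty_iff_false, iff_false, not_and]
    intro hz
    have := hz.diff_dist_adj (u := y)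
    omega
  simp [this]

theorem SimpleGraph.cosineMatrix_apply_self {V : Type*} [DecidableEq V]
    (G : SimpleGraph V) [DecidableRel G.Adj] (u₁ u₂ u₃ : ℝ) (x : V) :
    (1 + u₁ • G.adjMatrix ℝ + u₂ • distMatrix G 2 + u₃ • distMatrix G 3) x x = 1 := by
  simp [distMatrix]

namespace IsDRG

variable {V : Type*} [Fintype V] {G : SimpleGraph V}
  {b c a : ℕ → ℕ}

theorem adjMatrix_mul_distMatrix [DecidableRel G.Adj] (h : IsDRG G 3 b c a) (i : ℕ) (x y : V) :
    (G.adjMatrix ℝ * distMatrix G i) x y =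
      if G.dist y x + 1 = i then (b (G.dist y x) : ℝ) else
      if G.dist y x = i then (a (G.dist y x) : ℝ) else
      if G.dist y x = i + 1 then (c (G.dist y x) : ℝ) else 0 := by
  rw [SimpleGraph.adjMatrix_mul_distMatrix_apply]
  have hd := h.le_diam y x
  split_ifs with h₁ h₂ h₃
  · rw [← h.card_b _ hd y x rfl, h₁]
  · rw [← h.card_a _ hd y x rfl, h₂]
  · rw [← h.card_c _ hd y x rfl, h₃, Nat.add_sub_cancel]
  · rw [SimpleGraph.card_adj_and_dist_eq_zero (by omega), Nat.cast_zero]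

theorem distanceRecurrence [DecidableEq V] [DecidableRel G.Adj] (h : IsDRG G 3 b c a) :
    DistanceRecurrence (G.adjMatrix ℝ) (distMatrix G 2) (distMatrix G 3)
      (b 0) (a 1) (a 2) (a 3) (b 1) (b 2) (c 2) (c 3) := by
  have hA : G.adjMatrix ℝ = distMatrix G 1 := by
    ext x y
    simp [distMatrix, SimpleGraph.adjMatrix_apply, SimpleGraph.dist_eq_one_iff_adj]
  have h1 : (1 : Matrix V V ℝ) = distMatrix G 0 := by
    ext x y
    simp only [distMatrix, Matrix.one_apply, Matrix.of_apply, h.connected.dist_eq_zero_iff]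
  constructor
  · nth_rewrite 2 3 [hA]
    rw [h1]
    ext x y
    rw [h.adjMatrix_mul_distMatrix 1]
    have hd := h.le_diam y x
    simp only [distMatrix, Matrix.add_apply, Matrix.smul_apply, Matrix.of_apply,
      SimpleGraph.dist_comm (u := x)]
    interval_cases G.dist y x <;> simp
  · nth_rewrite 2 [hA]
    ext x y
    rw [h.adjMatrix_mul_distMatrix 2]
    have hd := h.le_diam y x
    simp only [distMatrix, Matrix.add_apply, Matrix.smul_apply, Matrix.of_apply,
      SimpleGraph.dist_comm (u := x)]
    interval_cases G.dist y x <;> simp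
  · ext x y
    rw [h.adjMatrix_mul_distMatrix 3]
    have hd := h.le_diam y x
    simp only [distMatrix, Matrix.add_apply, Matrix.smul_apply, Matrix.of_apply,
      SimpleGraph.dist_comm (u := x)]
    interval_cases G.dist y x <;> simp

theorem degree_eq [DecidableRel G.Adj] (h : IsDRG G 3 b c a) (x : V) : G.degree x = b 0 := by
  classical
  rw [← h.card_b 0 (by norm_num) x x (by simp), ← SimpleGraph.card_neighborFinset_eq_degree,
    Nat.card_eq_fintype_card, Fintype.card_subtype]
  congr 1
  ext z
  simp [SimpleGraph.dist_eq_one_iff_adj]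

theorem exists_geodesic (h : IsDRG G 3 b c a) :
    ∃ w : ℕ → V, (∀ i < 3, G.Adj (w i) (w (i + 1))) ∧ ∀ i ≤ 3, G.dist (w 0) (w i) = i := by
  obtain ⟨x, y, hxy⟩ := h.exists_diam
  obtain ⟨p, hp⟩ := h.connected.exists_walk_length_eq_dist x y
  rw [hxy] at hp
  have hadj : ∀ i < 3, G.Adj (p.getVert i) (p.getVert (i + 1)) := fun i hi =>
    p.adj_getVert_succ (by omega)
  refine ⟨p.getVert, hadj, ?_⟩
  have d0 := (hadj 0 (by norm_num)).diff_dist_adj (u := x)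
  have d1 := (hadj 1 (by norm_num)).diff_dist_adj (u := x)
  have d2 := (hadj 2 (by norm_num)).diff_dist_adj (u := x)
  have e3 : p.getVert 3 = y := by rw [← hp]; exact p.getVert_length
  simp only [Nat.reduceAdd, zero_add, e3, SimpleGraph.Walk.getVert_zero, hxy,
    SimpleGraph.dist_self] at d0 d1 d2
  intro i hi
  rw [SimpleGraph.Walk.getVert_zero]
  interval_cases i
  · simp
  · omega
  · omega
  · rw [e3, hxy]

theorem b_pos (h : IsDRG G 3 b c a) {i : ℕ} (hi : i < 3) : 0 < b i := by
  obtain ⟨w, hw, hd⟩ := h.exists_geodesic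
  rw [← h.card_b i hi.le _ _ (hd i hi.le)]
  have : Nonempty {z : V | G.Adj (w i) z ∧ G.dist (w 0) z = i + 1} :=
    ⟨⟨w (i + 1), hw i hi, hd _ hi⟩⟩
  exact Nat.card_pos

theorem c_pos (h : IsDRG G 3 b c a) {i : ℕ} (hi : i < 3) : 0 < c (i + 1) := by
  obtain ⟨w, hw, hd⟩ := h.exists_geodesic
  rw [← h.card_c (i + 1) hi _ _ (hd _ hi)]
  have : Nonempty {z : V | G.Adj (w (i + 1)) z ∧ G.dist (w 0) z = i + 1 - 1} :=
    ⟨⟨w i, (hw i hi).symm, hd _ hi.le⟩⟩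
  exact Nat.card_pos

theorem valency_eq (h : IsDRG G 3 b c a) :
    (b 0 : ℝ) = 1 + a 1 + b 1 ∧ (b 0 : ℝ) = c 2 + a 2 + b 2 ∧ (b 0 : ℝ) = c 3 + a 3 := by
  classical
  obtain ⟨w, hw, hd⟩ := h.exists_geodesic
  have hJ : ∀ x y : V, ∑ i ∈ Finset.range 4, distMatrix G i x y = 1 := fun x y => by
    have := h.le_diam x y
    simp only [distMatrix, Matrix.of_apply, Finset.sum_ite_eq, Finset.mem_range]
    rw [if_pos (by omega)]
  have hsum : ∀ x y : V, ∑ i ∈ Finset.range 4, (G.adjMatrix ℝ * distMatrix G i) x y = b 0 :=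
    fun x y => by
      simp only [SimpleGraph.adjMatrix_mul_apply]
      rw [Finset.sum_comm]
      simp [hJ, h.degree_eq]
  have key : ∀ j ≤ 3, (b 0 : ℝ) = ∑ i ∈ Finset.range 4,
      if j + 1 = i then (b j : ℝ) else if j = i then (a j : ℝ) else
        if j = i + 1 then (c j : ℝ) else 0 := fun j hj => by
    rw [← hsum (w j) (w 0)]
    refine Finset.sum_congr rfl fun i _ => ?_
    rw [h.adjMatrix_mul_distMatrix i, hd j hj]
  have hc1 : c 1 = 1 := by
    rw [← h.card_c 1 (by norm_num) _ _ (hd 1 (by norm_num)), Nat.card_eq_one_iff_unique]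
    refine ⟨⟨fun s t => Subtype.ext ?_⟩, ⟨⟨w 0, (hw 0 (by norm_num)).symm, by simp⟩⟩⟩
    have hs := h.connected.dist_eq_zero_iff.mp s.2.2
    have ht := h.connected.dist_eq_zero_iff.mp t.2.2
    exact hs.symm.trans ht
  have k1 := key 1 (by norm_num)
  have k2 := key 2 (by norm_num)
  have k3 := key 3 (by norm_num)
  simp [Finset.sum_range_succ, hc1] at k1 k2 k3
  exact ⟨k1, k2, k3⟩

/-- Every eigenvalue is a root of the characteristic equation of the intersection matrix. -/
theorem isEig_charEq [DecidableEq V] [DecidableRel G.Adj] (h : IsDRG G 3 b c a) {θ p₂ p₃ : ℝ}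
    (hθ : IsEig G θ) (hp₂ : c 2 * p₂ = θ ^ 2 - a 1 * θ - b 0)
    (hp₃ : c 3 * p₃ = (θ - a 2) * p₂ - b 1 * θ) : (θ - a 3) * p₃ = b 2 * p₂ := by
  obtain ⟨v, hv, e⟩ := hθ
  have hM : G.adjMatrix ℝ * Matrix.replicateCol Unit v = θ • Matrix.replicateCol Unit v := by
    rw [← Matrix.replicateCol_mulVec, e, Matrix.replicateCol_smul]
  have hc₂ : (c 2 : ℝ) ≠ 0 := by exact_mod_cast (h.c_pos (i := 1) (by norm_num)).ne'
  have hc₃ : (c 3 : ℝ) ≠ 0 := by exact_mod_cast (h.c_pos (i := 2) (by norm_num)).ne'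
  have := (h.distanceRecurrence.mul_eq_smul hc₂ hc₃ hM hp₂ hp₃).2.2
  rw [smul_eq_zero, Matrix.replicateCol_eq_zero] at this
  exact sub_eq_zero.mp (this.resolve_right hv)

/-- A solution of the characteristic equation of the intersection matrix is an eigenvalue. -/
theorem isEig_of_cosines [DecidableEq V] [DecidableRel G.Adj] (h : IsDRG G 3 b c a)
    {θ u₁ u₂ u₃ : ℝ} (h₀ : b 0 * u₁ = θ) (h₁ : 1 + a 1 * u₁ + b 1 * u₂ = θ * u₁)
    (h₂ : c 2 * u₁ + a 2 * u₂ + b 2 * u₃ = θ * u₂) (h₃ : c 3 * u₂ + a 3 * u₃ = θ * u₃) :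
    IsEig G θ := by
  obtain ⟨x, -⟩ := h.exists_diam
  have e := h.distanceRecurrence.mul_cosineMatrix h₀ h₁ h₂ h₃
  refine ⟨fun y => (1 + u₁ • G.adjMatrix ℝ + u₂ • distMatrix G 2 + u₃ • distMatrix G 3) y x,
    fun h0 => ?_, ?_⟩
  · have := congr_fun h0 x
    simp only [SimpleGraph.cosineMatrix_apply_self, Pi.zero_apply] at this
    exact one_ne_zero this
  · ext y
    exact congr_fun₂ e y x

theorem cosineMatrix_posSemidef [DecidableEq V] [DecidableRel G.Adj] (h : IsDRG G 3 b c a)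
    {θ u₁ u₂ u₃ : ℝ} (h₀ : b 0 * u₁ = θ) (h₁ : 1 + a 1 * u₁ + b 1 * u₂ = θ * u₁)
    (h₂ : c 2 * u₁ + a 2 * u₂ + b 2 * u₃ = θ * u₂) (h₃ : c 3 * u₂ + a 3 * u₃ = θ * u₃) :
    (1 + u₁ • G.adjMatrix ℝ + u₂ • distMatrix G 2 + u₃ • distMatrix G 3).PosSemidef := by
  have hc₂ : (c 2 : ℝ) ≠ 0 := by exact_mod_cast (h.c_pos (i := 1) (by norm_num)).ne'
  have hc₃ : (c 3 : ℝ) ≠ 0 := by exact_mod_cast (h.c_pos (i := 2) (by norm_num)).ne'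
  have e := h.distanceRecurrence.mul_cosineMatrix h₀ h₁ h₂ h₃
  obtain ⟨e₂, e₃, -⟩ := h.distanceRecurrence.mul_eq_smul hc₂ hc₃ e
    (mul_div_cancel₀ _ hc₂) (mul_div_cancel₀ _ hc₃)
  refine Matrix.IsSymm.posSemidef_of_mul_self_eq_smul ?_
    (SimpleGraph.cosineMatrix_apply_self G _ _ _)
    (γ := 1 + u₁ * θ + u₂ * ((θ ^ 2 - a 1 * θ - b 0) / c 2) + u₃ *
      (((θ - a 2) * ((θ ^ 2 - a 1 * θ - b 0) / c 2) - b 1 * θ) / c 3)) ?_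
  · exact ((Matrix.isSymm_one.add ((G.isSymm_adjMatrix).smul _)).add
      ((distMatrix_isSymm G 2).smul _)).add ((distMatrix_isSymm G 3).smul _)
  · set N := 1 + u₁ • G.adjMatrix ℝ + u₂ • distMatrix G 2 + u₃ • distMatrix G 3 with hN
    nth_rewrite 1 [hN]
    simp only [Matrix.add_mul, Matrix.smul_mul, Matrix.one_mul, e, e₂, e₃]
    module

/-- The Krein condition for two cosine sequences `u` and `w`: the sum of `kᵢ uᵢ² wᵢ` is
nonnegative. -/
theorem krein_nonneg (h : IsDRG G 3 b c a)
    {θ u₁ u₂ u₃ : ℝ} (h₀ : b 0 * u₁ = θ) (h₁ : 1 + a 1 * u₁ + b 1 * u₂ = θ * u₁)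
    (h₂ : c 2 * u₁ + a 2 * u₂ + b 2 * u₃ = θ * u₂) (h₃ : c 3 * u₂ + a 3 * u₃ = θ * u₃)
    {η w₁ w₂ w₃ : ℝ} (g₀ : b 0 * w₁ = η) (g₁ : 1 + a 1 * w₁ + b 1 * w₂ = η * w₁)
    (g₂ : c 2 * w₁ + a 2 * w₂ + b 2 * w₃ = η * w₂) (g₃ : c 3 * w₂ + a 3 * w₃ = η * w₃)
    {k₂ k₃ : ℝ} (hk₂ : c 2 * k₂ = b 0 * b 1) (hk₃ : c 3 * k₃ = k₂ * b 2) :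
    0 ≤ 1 + b 0 * (u₁ ^ 2 * w₁) + k₂ * (u₂ ^ 2 * w₂) + k₃ * (u₃ ^ 2 * w₃) := by
  classical
  obtain ⟨x, -⟩ := h.exists_diam
  have hc₂ : (c 2 : ℝ) ≠ 0 := by exact_mod_cast (h.c_pos (i := 1) (by norm_num)).ne'
  have hc₃ : (c 3 : ℝ) ≠ 0 := by exact_mod_cast (h.c_pos (i := 2) (by norm_num)).ne'
  obtain ⟨v₁, v₂, -⟩ := h.valency_eq
  have hN := h.cosineMatrix_posSemidef h₀ h₁ h₂ h₃
  have hP := (hN.hadamard hN).hadamard (h.cosineMatrix_posSemidef g₀ g₁ g₂ g₃)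
  have hP' : Matrix.hadamard (Matrix.hadamard
      (1 + u₁ • G.adjMatrix ℝ + u₂ • distMatrix G 2 + u₃ • distMatrix G 3)
      (1 + u₁ • G.adjMatrix ℝ + u₂ • distMatrix G 2 + u₃ • distMatrix G 3))
      (1 + w₁ • G.adjMatrix ℝ + w₂ • distMatrix G 2 + w₃ • distMatrix G 3) =
      1 + (u₁ ^ 2 * w₁) • G.adjMatrix ℝ + (u₂ ^ 2 * w₂) • distMatrix G 2 +
        (u₃ ^ 2 * w₃) • distMatrix G 3 := by
    ext y z
    have hd := h.le_diam y z
    simp only [Matrix.hadamard_apply, Matrix.add_apply, Matrix.smul_apply, distMatrix,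
      Matrix.of_apply, Matrix.one_apply, SimpleGraph.adjMatrix_apply,
      ← SimpleGraph.dist_eq_one_iff_adj, ← h.connected.dist_eq_zero_iff]
    interval_cases G.dist y z <;> simp [sq]
  rw [hP'] at hP
  have hJ : G.adjMatrix ℝ * Matrix.replicateCol Unit (1 : V → ℝ) =
      (b 0 : ℝ) • Matrix.replicateCol Unit (1 : V → ℝ) := by
    rw [← Matrix.replicateCol_mulVec, ← Matrix.replicateCol_smul]
    congr 1
    ext y
    simp [SimpleGraph.adjMatrix_mulVec_apply, h.degree_eq]
  obtain ⟨e₂, e₃, -⟩ := h.distanceRecurrence.mul_eq_smul hc₂ hc₃ hJ (p₂ := k₂) (p₃ := k₃)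
    (by linear_combination hk₂ - (b 0 : ℝ) * v₁)
    (by linear_combination hk₃ - hk₂ - k₂ * v₂)
  rw [← Matrix.replicateCol_mulVec, ← Matrix.replicateCol_smul, Matrix.replicateCol_inj]
    at hJ e₂ e₃
  have hnonneg := hP.dotProduct_mulVec_nonneg 1
  simp only [Matrix.add_mulVec, Matrix.smul_mulVec, Matrix.one_mulVec, hJ, e₂, e₃] at hnonneg
  have hV : 0 < (Fintype.card V : ℝ) := by
    exact_mod_cast Fintype.card_pos_iff.mpr ⟨x⟩
  refine nonneg_of_mul_nonneg_right (hnonneg.trans_eq ?_) hV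
  simp [dotProduct_add, dotProduct_smul, dotProduct_one]
  ring

end IsDRG

/-- The valency of a Shilla graph is `a₃ (a₃ - a₁)`. -/
theorem IsShilla.valency_eq {V : Type*} [Fintype V] [DecidableEq V] {G : SimpleGraph V}
    [DecidableRel G.Adj] {b c a : ℕ → ℕ} (hG : IsShilla G b c a) :
    (b 0 : ℝ) = a 3 * (a 3 - a 1) := by
  have hb : (b 2 : ℝ) ≠ 0 := by exact_mod_cast (hG.drg.b_pos (i := 2) (by norm_num)).ne'
  have hc₂ : (c 2 : ℝ) ≠ 0 := by exact_mod_cast (hG.drg.c_pos (i := 1) (by norm_num)).ne'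
  have hc₃ : (c 3 : ℝ) ≠ 0 := by exact_mod_cast (hG.drg.c_pos (i := 2) (by norm_num)).ne'
  have e := hG.drg.isEig_charEq hG.second.1 (mul_div_cancel₀ _ hc₂) (mul_div_cancel₀ _ hc₃)
  rw [sub_self, zero_mul, eq_comm, mul_eq_zero, or_iff_right hb, div_eq_zero_iff,
    or_iff_left hc₂] at e
  linear_combination -e

/-- For a Shilla distance-regular graph with `b = b(Γ)`, the smallest eigenvalue `θ₃`
satisfies `-b² < θ₃ < -b`. -/
theorem stmt15 {V : Type*} [Fintype V] [DecidableEq V] (G : SimpleGraph V)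
    [DecidableRel G.Adj] (b c a : ℕ → ℕ) (hG : IsShilla G b c a)
    (β : ℕ) (hβ : a 3 = a 1 + β)
    (θ3 : ℝ) (h3 : IsSmallestEig G θ3) :
    -(β : ℝ) ^ 2 < θ3 ∧ θ3 < -(β : ℝ) := by
  have h := hG.drg
  have hβ' : (a 3 : ℝ) = a 1 + β := by exact_mod_cast hβ
  have hk : (b 0 : ℝ) = a 3 * β := by rw [hG.valency_eq, hβ']; ring
  have pb₀ : (0 : ℝ) < b 0 := by exact_mod_cast h.b_pos (i := 0) (by norm_num)
  have pb₁ : (0 : ℝ) < b 1 := by exact_mod_cast h.b_pos (i := 1) (by norm_num)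
  have pb₂ : (0 : ℝ) < b 2 := by exact_mod_cast h.b_pos (i := 2) (by norm_num)
  have pc₂ : (0 : ℝ) < c 2 := by exact_mod_cast h.c_pos (i := 1) (by norm_num)
  have pc₃ : (0 : ℝ) < c 3 := by exact_mod_cast h.c_pos (i := 2) (by norm_num)
  obtain ⟨v₁, v₂, v₃⟩ := h.valency_eq
  have pa : (0 : ℝ) < a 3 := by
    refine lt_of_le_of_ne (Nat.cast_nonneg _) fun h0 => ?_
    rw [← h0, zero_mul] at hk
    exact pb₀.ne' hk
  have hb₁ : (b 1 : ℝ) = (a 3 + 1) * (β - 1) := by linear_combination hk - v₁ + hβ'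
  have hc₃ : (c 3 : ℝ) = a 3 * (β - 1) := by linear_combination hk - v₃
  have pβ : (1 : ℝ) < β := by
    have : (0 : ℝ) < β - 1 := pos_of_mul_pos_right (hb₁ ▸ pb₁) (by positivity)
    linarith
  have ha₁ : (a 1 : ℝ) = a 3 - β := by linarith
  have ha₂ : (a 2 : ℝ) = a 3 * β - b 2 - c 2 := by linarith
  obtain ⟨B, hB⟩ : ∃ B : ℝ, B = β - 1 := ⟨_, rfl⟩
  have pB : 0 < B := by linarith
  rw [← hB] at hb₁ hc₃
  have hβ₀ : (β : ℝ) ≠ 0 := by positivity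
  have cosines : ∀ θ : ℝ,
      ((θ - a 3) * (θ - a 2) - b 2 * c 3) * (θ + β) = c 2 * b 1 * θ → ∃ u₁ u₂ u₃ : ℝ,
      u₁ = θ / (a 3 * β) ∧ u₃ = (θ + β) / (β * (a 3 + 1)) ∧ b 0 * u₁ = θ ∧
      1 + a 1 * u₁ + b 1 * u₂ = θ * u₁ ∧ c 2 * u₁ + a 2 * u₂ + b 2 * u₃ = θ * u₂ ∧
      c 3 * u₂ + a 3 * u₃ = θ * u₃ := fun θ hθ => by
    refine ⟨_, (θ - a 3) * (θ + β) / (β * (a 3 + 1) * (a 3 * B)), _, rfl, rfl, ?_, ?_, ?_, ?_⟩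
    · rw [hk]; field_simp
    · rw [ha₁, hb₁]; field_simp; ring
    · rw [hb₁, hc₃] at hθ
      field_simp
      linear_combination -hθ
    · rw [hc₃]; field_simp; ring
  have upper : θ3 < -(β : ℝ) := by
    obtain ⟨s, hs⟩ : ∃ s : ℝ, s = a 1 + a 2 - b 0 := ⟨_, rfl⟩
    obtain ⟨t, ht⟩ : ∃ t : ℝ, t = B * b 2 - a 2 := ⟨_, rfl⟩
    have hcB : 0 < c 2 * B := by positivity
    have hlt : (s + 2 * β) ^ 2 < s ^ 2 - 4 * t := by
      have : (s + 2 * β) ^ 2 - (s ^ 2 - 4 * t) = -4 * (c 2 * B) := by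
        rw [hs, ht, ha₁, ha₂, hk, hB]; ring
      linarith
    have hroot := Real.lt_sqrt_of_sq_lt hlt
    have hsq := Real.sq_sqrt ((sq_nonneg _).trans hlt.le)
    obtain ⟨θ, hθ⟩ : ∃ θ : ℝ, θ = (s - √(s ^ 2 - 4 * t)) / 2 := ⟨_, rfl⟩
    have hq : θ ^ 2 - s * θ + t = 0 := by
      rw [hθ]; linear_combination hsq / 4
    obtain ⟨u₁, u₂, u₃, -, -, h₀, h₁, h₂, h₃⟩ := cosines θ (by
      rw [hs, ht, ha₁, ha₂, hk, hB] at hq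
      rw [hb₁, hc₃, ha₂, hB]
      linear_combination (θ - a 3 * β) * hq)
    have := h3.2 θ (h.isEig_of_cosines h₀ h₁ h₂ h₃)
    linarith
  refine ⟨?_, upper⟩
  obtain ⟨w₁, w₂, w₃, hw₁, hw₃, g₀, g₁, g₂, g₃⟩ := cosines θ3 (by
    have e := h.isEig_charEq h3.1 (mul_div_cancel₀ _ pc₂.ne') (mul_div_cancel₀ _ pc₃.ne')
    have hne : θ3 - a 3 ≠ 0 := by linarith
    field_simp at e
    apply mul_left_cancel₀ hne
    rw [hk, ha₁] at e
    linear_combination e)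
  have hkr := h.krein_nonneg (θ := a 3) (u₁ := 1 / β) (u₂ := 0) (u₃ := -c 2 / (β * b 2))
    (by rw [hk]; field_simp) (by rw [ha₁]; field_simp; ring) (by field_simp; ring) (by ring)
    g₀ g₁ g₂ g₃ (k₂ := β * a 3 * (a 3 + 1) * B / c 2) (k₃ := β * (a 3 + 1) * b 2 / c 2)
    (by rw [hk, hb₁]; field_simp) (by rw [hc₃]; field_simp)
  have hval : 1 + b 0 * ((1 / (β : ℝ)) ^ 2 * w₁) + β * a 3 * (a 3 + 1) * B / c 2 * (0 ^ 2 * w₂) +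
      β * (a 3 + 1) * b 2 / c 2 * ((-c 2 / (β * b 2)) ^ 2 * w₃) =
      ((b 2 + c 2) * θ3 + β ^ 2 * b 2 + c 2 * β) / (b 2 * β ^ 2) := by
    rw [hk, hw₁, hw₃]; field_simp; ring
  rw [hval, le_div_iff₀ (by positivity), zero_mul] at hkr
  by_contra! hle
  have h1 : (b 2 + c 2) * θ3 ≤ (b 2 + c 2) * -(β : ℝ) ^ 2 :=
    mul_le_mul_of_nonneg_left hle (by positivity)
  have h2 : 0 < c 2 * β * B := by positivity
  rw [hB] at h2
  linarith
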